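/- arXiv:2102.07069 — 2 statements merged into one kernel-verified Lean document; each statement's English description precedes it below -/
import Mathlib

section
/- Let (E, 𝓑) be a measurable space, κ₁ and κ₂ Markov kernels from E to E, and π a probability measure on E that is invariant for κ₂, i.e. ∫ κ₂(y, A) π(dy) = π(A) for all A ∈ 𝓑. Let κ₁⊚κ₂ denote the composed kernel (κ₁⊚κ₂)(x, A) = ∫ κ₂(y, A) κ₁(x, dy). Then sup_{x∈E} ‖(κ₁⊚κ₂)(x,·) − π‖_Var ≤ (sup_{x∈E} ‖κ₁(x,·) − π‖_Var) · (sup_{y∈E} ‖κ₂(y,·) − π‖_Var). -/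
open MeasureTheory ProbabilityTheory ENNReal

/-- The total variation norm `‖μ - ν‖_Var` of the difference of two finite measures. -/
noncomputable def tvDist {E : Type*} [MeasurableSpace E]
    (μ ν : Measure E) [IsFiniteMeasure μ] [IsFiniteMeasure ν] : ℝ≥0∞ :=
  (μ.toSignedMeasure - ν.toSignedMeasure).totalVariation Set.univ

lemma tv_aux {E : Type*} [MeasurableSpace E]
    (μ ν : Measure E) [IsFiniteMeasure μ] [IsFiniteMeasure ν] :
    ∃ p n : Measure E, IsFiniteMeasure p ∧ IsFiniteMeasure n ∧
      (tvDist μ ν = p Set.univ + n Set.univ) ∧ Measure.MutuallySingular p n ∧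
      ∀ A, MeasurableSet A → μ.real A - ν.real A = p.real A - n.real A := by
  set s := μ.toSignedMeasure - ν.toSignedMeasure with hs
  refine ⟨s.toJordanDecomposition.posPart, s.toJordanDecomposition.negPart,
    inferInstance, inferInstance, rfl, s.toJordanDecomposition.mutuallySingular, ?_⟩
  intro A hA
  have h := congrArg (fun t : SignedMeasure E => t A) s.toSignedMeasure_toJordanDecomposition
  simp only [JordanDecomposition.toSignedMeasure, hs, VectorMeasure.sub_apply,
    Measure.toSignedMeasure_apply_measurable hA] at h
  exact h.symm

lemma tvDist_ne_top' {E : Type*} [MeasurableSpace E]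
    (μ ν : Measure E) [IsFiniteMeasure μ] [IsFiniteMeasure ν] : tvDist μ ν ≠ ⊤ := by
  obtain ⟨p, n, hp, hn, h, -, -⟩ := tv_aux μ ν
  rw [h]; finiteness

lemma tv_exists {E : Type*} [MeasurableSpace E]
    (μ ν : Measure E) [IsProbabilityMeasure μ] [IsProbabilityMeasure ν] :
    ∃ A, MeasurableSet A ∧ (tvDist μ ν).toReal = 2 * (μ.real A - ν.real A) := by
  obtain ⟨p, n, hp, hn, h, ⟨B, hB, h1, h2⟩, h3⟩ := tv_aux μ ν
  refine ⟨Bᶜ, hB.compl, ?_⟩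
  have hu := h3 _ MeasurableSet.univ
  have hc := h3 _ hB.compl
  have hpB : p.real B = 0 := by simp [measureReal_def, h1]
  have hnB : n.real Bᶜ = 0 := by simp [measureReal_def, h2]
  have hpc := measureReal_add_measureReal_compl (μ := p) hB
  rw [h, ENNReal.toReal_add (by finiteness) (by finiteness)]
  change p.real _ + n.real _ = _
  simp only [probReal_univ] at hu
  linarith

lemma tv_set {E : Type*} [MeasurableSpace E]
    (μ ν : Measure E) [IsProbabilityMeasure μ] [IsProbabilityMeasure ν]
    (A : Set E) (hA : MeasurableSet A) :
    2 * |μ.real A - ν.real A| ≤ (tvDist μ ν).toReal := by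
  obtain ⟨p, n, hp, hn, h, -, h3⟩ := tv_aux μ ν
  have hu := h3 _ MeasurableSet.univ
  have hc := h3 _ hA
  have hpc : p.real A ≤ p.real Set.univ := measureReal_mono (Set.subset_univ _)
  have hnc : n.real A ≤ n.real Set.univ := measureReal_mono (Set.subset_univ _)
  have hp0 : 0 ≤ p.real A := measureReal_nonneg
  have hn0 : 0 ≤ n.real A := measureReal_nonneg
  rw [h, ENNReal.toReal_add (by finiteness) (by finiteness)]
  change _ ≤ p.real _ + n.real _
  simp only [probReal_univ] at hu
  rw [hc]
  rcases abs_cases (p.real A - n.real A) with h | h <;> linarith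

lemma tv_int {E : Type*} [MeasurableSpace E]
    (μ ν : Measure E) [IsFiniteMeasure μ] [IsFiniteMeasure ν]
    (f : E → ℝ) (hf : Measurable f) (c : ℝ) (hc : ∀ x, |f x| ≤ c) :
    ∫ x, f x ∂μ - ∫ x, f x ∂ν ≤ c * (tvDist μ ν).toReal := by
  obtain ⟨p, n, hp, hn, h, -, h3⟩ := tv_aux μ ν
  have hi : ∀ (ρ : Measure E) [IsFiniteMeasure ρ], Integrable f ρ := fun ρ _ =>
    Integrable.of_bound hf.aestronglyMeasurable c (Filter.Eventually.of_forall hc)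
  have hb : ∀ (ρ : Measure E) [IsFiniteMeasure ρ], |∫ x, f x ∂ρ| ≤ c * ρ.real Set.univ :=
    fun ρ _ => by
      rw [← Real.norm_eq_abs]
      exact norm_integral_le_of_norm_le_const (Filter.Eventually.of_forall hc)
  have he : μ + n = ν + p := by
    ext A hA
    have := h3 A hA
    rw [← measureReal_eq_measureReal_iff]
    rw [measureReal_add_apply, measureReal_add_apply]
    linarith
  have h4 : ∫ x, f x ∂(μ + n) = ∫ x, f x ∂(ν + p) := by rw [he]
  rw [integral_add_measure (hi _) (hi _), integral_add_measure (hi _) (hi _)] at h4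
  rw [h, ENNReal.toReal_add (by finiteness) (by finiteness)]
  change _ ≤ c * (p.real _ + n.real _)
  have := abs_le.1 (hb p)
  have := abs_le.1 (hb n)
  linarith

/-- Submultiplicativity of the uniform total variation distance to stationarity
(Section 1): if `π` is invariant for the Markov kernel `κ₂`, then the composition
`κ₁⊚κ₂` (first `κ₁`, then `κ₂`) satisfies
`sup_x ‖(κ₁⊚κ₂)(x,·) - π‖_Var ≤ (sup_x ‖κ₁(x,·) - π‖_Var)·(sup_y ‖κ₂(y,·) - π‖_Var)`. -/
theorem tvDist_comp_le
    {E : Type*} [MeasurableSpace E]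
    (κ₁ κ₂ : Kernel E E) [IsMarkovKernel κ₁] [IsMarkovKernel κ₂]
    (π : Measure E) [IsProbabilityMeasure π]
    (hinv : ∀ A : Set E, MeasurableSet A → ∫⁻ y, κ₂ y A ∂π = π A) :
    ⨆ x, tvDist ((κ₂ ∘ₖ κ₁) x) π ≤
      (⨆ x, tvDist (κ₁ x) π) * ⨆ y, tvDist (κ₂ y) π := by
  refine iSup_le fun x => ?_
  refine le_trans ?_ (mul_le_mul_left (le_iSup (fun x => tvDist (κ₁ x) π) x) _)
  set M := ⨆ y, tvDist (κ₂ y) π with hM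
  have hMtop : M ≠ ⊤ := by
    refine ne_top_of_le_ne_top (b := 2) (by finiteness) (iSup_le fun y => ?_)
    obtain ⟨A, hA, h⟩ := tv_exists (κ₂ y) π
    rw [← ENNReal.ofReal_toReal (tvDist_ne_top' (κ₂ y) π), h]
    refine ENNReal.ofReal_le_of_le_toReal ?_
    have h1 : (κ₂ y).real A ≤ 1 := measureReal_le_one
    have h2 : 0 ≤ π.real A := measureReal_nonneg
    simp only [ENNReal.toReal_ofNat]
    linarith
  obtain ⟨A, hA, h⟩ := tv_exists ((κ₂ ∘ₖ κ₁) x) π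
  rw [← ENNReal.toReal_le_toReal (tvDist_ne_top' _ _)
    (ENNReal.mul_ne_top (tvDist_ne_top' _ _) hMtop), ENNReal.toReal_mul, h]
  have hm : Measurable fun y => κ₂ y A := κ₂.measurable_coe hA
  have hmr : Measurable fun y => (κ₂ y).real A := hm.ennreal_toReal
  have key : ∀ ρ : Measure E, ∫ y, (κ₂ y).real A ∂ρ = (∫⁻ y, κ₂ y A ∂ρ).toReal := fun ρ =>
    integral_toReal hm.aemeasurable (Filter.Eventually.of_forall fun y => measure_lt_top _ _)
  have e1 : ((κ₂ ∘ₖ κ₁) x).real A = ∫ y, (κ₂ y).real A ∂(κ₁ x) := by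
    rw [key, measureReal_def, Kernel.comp_apply' _ _ _ hA]
  have e2 : π.real A = ∫ y, (κ₂ y).real A ∂π := by
    rw [key, measureReal_def, hinv A hA]
  have hi : ∀ (ρ : Measure E) [IsProbabilityMeasure ρ],
      ∫ y, ((κ₂ y).real A - π.real A) ∂ρ = ∫ y, (κ₂ y).real A ∂ρ - π.real A := fun ρ _ => by
    rw [integral_sub _ (integrable_const _)]
    · simp
    · refine Integrable.of_bound hmr.aestronglyMeasurable 1 (Filter.Eventually.of_forall ?_)
      intro y
      rw [Real.norm_of_nonneg measureReal_nonneg]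
      exact measureReal_le_one
  have := tv_int (κ₁ x) π (fun y => (κ₂ y).real A - π.real A) (hmr.sub_const _)
    (M.toReal / 2) (fun y => by
      have h1 := tv_set (κ₂ y) π A hA
      have h2 : (tvDist (κ₂ y) π).toReal ≤ M.toReal :=
        ENNReal.toReal_mono hMtop (le_iSup (fun y => tvDist (κ₂ y) π) y)
      linarith)
  rw [hi, hi, ← e1, ← e2] at this
  linarith
end

section
/- Let (E, d) be a metric space with Borel σ-algebra, π a probability measure on E, and κ a Markov kernel on E such that π is invariant for κ (∫ κ(y, A) π(dy) = π(A) for all Borel A) and κ has a jointly measurable nonnegative density p with respect to π, i.e. κ(y, A) = ∫_A p(y,z) π(dz) for all y and Borel A. Fix x ∈ E, r > 0 and U ≥ 0, and suppose the Harnack-type inequality holds: for every bounded measurable f : E → [0,∞) and every y with d(x,y) ≤ r, (∫ f(z) κ(x, dz))² ≤ e^{U} · ∫ f(z)² κ(y, dz). If π(B̄(x,r)) > 0, where B̄(x,r) = {y : d(x,y) ≤ r}, then ∫ p(x,z)² π(dz) ≤ e^{U} / π(B̄(x,r)). -/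
open MeasureTheory ProbabilityTheory ENNReal

/-- Abstract content of Lemmas 3.4 and 3.7: a dimension-free Harnack inequality for a
`π`-invariant Markov kernel `κ` with density `p` w.r.t. `π` implies the `L²(π)` bound
`∫ p(x,z)² π(dz) ≤ e^U / π(B̄(x,r))`. -/
theorem density_L2_bound_of_harnack
    {E : Type*} [MetricSpace E] [MeasurableSpace E] [BorelSpace E]
    (π : Measure E) [IsProbabilityMeasure π]
    (κ : Kernel E E) [IsMarkovKernel κ]
    (hinv : ∀ A : Set E, MeasurableSet A → ∫⁻ y, κ y A ∂π = π A)
    (p : E → E → ℝ) (hp : Measurable (Function.uncurry p)) (hp0 : ∀ y z, 0 ≤ p y z)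
    (hdens : ∀ (y : E) (A : Set E), MeasurableSet A →
      κ y A = ∫⁻ z in A, ENNReal.ofReal (p y z) ∂π)
    (x : E) (r : ℝ) (hr : 0 < r) (U : ℝ) (hU : 0 ≤ U)
    (harnack : ∀ f : E → ℝ, Measurable f → (∀ z, 0 ≤ f z) → (∃ C : ℝ, ∀ z, f z ≤ C) →
      ∀ y : E, dist x y ≤ r →
        (∫⁻ z, ENNReal.ofReal (f z) ∂(κ x)) ^ 2 ≤
          ENNReal.ofReal (Real.exp U) * ∫⁻ z, ENNReal.ofReal (f z ^ 2) ∂(κ y))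
    (hball : 0 < π (Metric.closedBall x r)) :
    ∫⁻ z, ENNReal.ofReal (p x z ^ 2) ∂π ≤
      ENNReal.ofReal (Real.exp U) / π (Metric.closedBall x r) := by
  have hpx : Measurable (p x) := hp.of_uncurry_left
  have hκ : ∀ y, κ y = π.withDensity (fun z => ENNReal.ofReal (p y z)) := by
    intro y
    ext A hA
    rw [withDensity_apply _ hA, hdens y A hA]
  have hbind : π.bind κ = π := by
    ext A hA
    rw [Measure.bind_apply hA κ.measurable.aemeasurable, hinv A hA]
  have key : ∀ n : ℕ, ∫⁻ z, ENNReal.ofReal ((min (n : ℝ) (p x z)) ^ 2) ∂π ≤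
      ENNReal.ofReal (Real.exp U) / π (Metric.closedBall x r) := by
    intro n
    have hf : Measurable (fun z => min (n : ℝ) (p x z)) := measurable_const.min hpx
    have hf0 : ∀ z, 0 ≤ min (n : ℝ) (p x z) := fun z => le_min (Nat.cast_nonneg n) (hp0 x z)
    have hg : Measurable (fun z => ENNReal.ofReal ((min (n : ℝ) (p x z)) ^ 2)) :=
      (hf.pow_const 2).ennreal_ofReal
    set I := ∫⁻ z, ENNReal.ofReal ((min (n : ℝ) (p x z)) ^ 2) ∂π with hI
    have hIfin : I ≠ ∞ := by
      have : I ≤ ∫⁻ _, ENNReal.ofReal ((n : ℝ) ^ 2) ∂π := by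
        refine lintegral_mono fun z => ENNReal.ofReal_le_ofReal ?_
        exact pow_le_pow_left₀ (hf0 z) (min_le_left _ _) 2
      refine ne_top_of_le_ne_top ?_ this
      simp
    have h1 : I ≤ ∫⁻ z, ENNReal.ofReal (min (n : ℝ) (p x z)) ∂(κ x) := by
      rw [hκ x, lintegral_withDensity_eq_lintegral_mul _ hpx.ennreal_ofReal hf.ennreal_ofReal]
      refine lintegral_mono fun z => ?_
      simp only [Pi.mul_apply]
      rw [← ENNReal.ofReal_mul (hp0 x z)]
      refine ENNReal.ofReal_le_ofReal ?_
      rw [sq]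
      exact mul_le_mul_of_nonneg_right (min_le_right _ _) (hf0 z)
    have h2 : I ^ 2 * π (Metric.closedBall x r) ≤ ENNReal.ofReal (Real.exp U) * I := by
      calc I ^ 2 * π (Metric.closedBall x r)
          = ∫⁻ _ in Metric.closedBall x r, I ^ 2 ∂π := by rw [setLIntegral_const]
        _ ≤ ∫⁻ y in Metric.closedBall x r, ENNReal.ofReal (Real.exp U) *
              ∫⁻ z, ENNReal.ofReal ((min (n : ℝ) (p x z)) ^ 2) ∂(κ y) ∂π := by
            refine setLIntegral_mono' Metric.isClosed_closedBall.measurableSet fun y hy => ?_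
            refine le_trans (pow_le_pow_left' h1 2) ?_
            exact harnack _ hf hf0 ⟨n, fun z => min_le_left _ _⟩ y
              (by rw [dist_comm]; exact hy)
        _ ≤ ∫⁻ y, ENNReal.ofReal (Real.exp U) *
              ∫⁻ z, ENNReal.ofReal ((min (n : ℝ) (p x z)) ^ 2) ∂(κ y) ∂π :=
            setLIntegral_le_lintegral _ _
        _ = ENNReal.ofReal (Real.exp U) * I := by
            rw [lintegral_const_mul _ hg.lintegral_kernel,
              ← Measure.lintegral_bind κ.measurable.aemeasurable hg.aemeasurable, hbind]
    rcases eq_or_ne I 0 with h0 | h0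
    · rw [h0]; exact zero_le
    rw [ENNReal.le_div_iff_mul_le (Or.inl hball.ne') (Or.inl (measure_ne_top _ _))]
    rw [← ENNReal.mul_le_mul_iff_right h0 hIfin]
    calc I * (I * π (Metric.closedBall x r)) = I ^ 2 * π (Metric.closedBall x r) := by ring
      _ ≤ ENNReal.ofReal (Real.exp U) * I := h2
      _ = I * ENNReal.ofReal (Real.exp U) := mul_comm _ _
  refine le_of_tendsto' (f := fun n : ℕ => ∫⁻ z, ENNReal.ofReal ((min (n : ℝ) (p x z)) ^ 2) ∂π)
    (x := Filter.atTop) ?_ key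
  refine lintegral_tendsto_of_tendsto_of_monotone
    (fun n => ((measurable_const.min hpx).pow_const 2).ennreal_ofReal.aemeasurable) ?_ ?_
  · refine Filter.Eventually.of_forall fun z n m hnm => ENNReal.ofReal_le_ofReal ?_
    refine pow_le_pow_left₀ (le_min (Nat.cast_nonneg n) (hp0 x z)) ?_ 2
    exact min_le_min_right _ (Nat.cast_le.2 hnm)
  · refine Filter.Eventually.of_forall fun z => ?_
    obtain ⟨N, hN⟩ := exists_nat_ge (p x z)
    refine tendsto_const_nhds.congr' ?_
    filter_upwards [Filter.eventually_ge_atTop N] with n hn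
    rw [min_eq_right (hN.trans (Nat.cast_le.2 hn))]
end
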